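/- arXiv:1510.08207 — 2 statements merged into one kernel-verified Lean document; each statement's English description precedes it below -/
import Mathlib

section
/- Let p be a prime and let R be a noncommutative (not necessarily unital) finite ring whose order is a power of p. Then |Cent(R)| ≥ p + 2, and equality |Cent(R)| = p + 2 holds if and only if the additive quotient group R/Z(R) is isomorphic (as an additive group) to ℤ_p × ℤ_p. -/
/-- The centralizer of `r` in a (not necessarily unital) ring: `{s | r*s = s*r}`. -/
def rCentralizer {R : Type*} [NonUnitalRing R] (r : R) : Set R := {s | r * s = s * r}

/-- The set of all centralizers of elements of `R`. -/
def Cent (R : Type*) [NonUnitalRing R] : Set (Set R) :=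
  Set.range (fun r : R => rCentralizer r)

/-- The center of a (not necessarily unital) ring, as a set. -/
def rCenter (R : Type*) [NonUnitalRing R] : Set R := {s | ∀ r : R, r * s = s * r}

/-- The center of a (not necessarily unital) ring, as an additive subgroup. -/
def centerAddSubgroup (R : Type*) [NonUnitalRing R] : AddSubgroup R where
  carrier := {s | ∀ r : R, r * s = s * r}
  zero_mem' := by intro r; rw [mul_zero, zero_mul]
  add_mem' := by intro a b ha hb r; rw [mul_add, add_mul, ha r, hb r]
  neg_mem' := by intro a ha r; rw [mul_neg, neg_mul, ha r]


section CoverLemmas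
open Classical in
/-- The elements of a subgroup, as a finset. -/
noncomputable def finOf {G : Type*} [AddCommGroup G] [Fintype G] (H : AddSubgroup G) : Finset G :=
  Finset.univ.filter (fun g => g ∈ H)

variable {G : Type*} [AddCommGroup G] [Fintype G]

lemma mem_finOf (H : AddSubgroup G) (g : G) : g ∈ finOf H ↔ g ∈ H := by
  simp [finOf]

lemma card_finOf (H : AddSubgroup G) : (finOf H).card = Nat.card H := by
  classical
  rw [Nat.card_eq_fintype_card, Fintype.card_subtype]
  unfold finOf
  congr 1

lemma card_inf_mul (H K : AddSubgroup G) :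
    Nat.card (H ⊓ K : AddSubgroup G) * H.relIndex K = Nat.card K := by
  rw [← AddSubgroup.inf_relIndex_right, ← AddSubgroup.relIndex_bot_left,
    ← AddSubgroup.relIndex_bot_left]
  exact AddSubgroup.relIndex_mul_relIndex _ _ _ bot_le inf_le_right

open Classical in
lemma card_diff_add (H K : AddSubgroup G) :
    (finOf K \ finOf H).card + Nat.card (H ⊓ K : AddSubgroup G) = Nat.card K := by
  rw [← card_finOf, ← card_finOf]
  have : finOf (H ⊓ K) = finOf K ∩ finOf H := by
    ext g; simp [mem_finOf, and_comm]
  rw [this]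
  exact Finset.card_sdiff_add_card_inter _ _

open Classical in
lemma card_diff (q : ℕ) (H K : AddSubgroup G) (h : H.relIndex K = q + 1) :
    (q + 1) * (finOf K \ finOf H).card = q * Nat.card K := by
  have h1 := card_inf_mul H K
  have h2 := card_diff_add H K
  rw [h] at h1
  nlinarith

lemma relIndex_of_prime {p : ℕ} (hp : p.Prime) (H K : AddSubgroup G) (h : H.index = p)
    (hK : ¬ K ≤ H) : H.relIndex K = p := by
  have := AddSubgroup.relIndex_dvd_index_of_normal H K
  rw [h] at this
  rcases (Nat.dvd_prime hp).1 this with h1 | h1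
  · exact absurd (AddSubgroup.relIndex_eq_one.1 h1) hK
  · exact h1

open Classical in
lemma card_diff_le {q : ℕ} (hp : (q + 1).Prime) (H K : AddSubgroup G) (h : H.index = q + 1) :
    (q + 1) * (finOf K \ finOf H).card ≤ q * Nat.card K := by
  by_cases hK : K ≤ H
  · have : finOf K \ finOf H = ∅ := by
      rw [Finset.sdiff_eq_empty_iff_subset]
      intro g hg
      rw [mem_finOf] at *
      exact hK hg
    simp [this]
  · exact (card_diff q H K (relIndex_of_prime hp H K h hK)).le

open Classical in
/-- Multiplicity counting outside a subgroup of index `p`. -/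
lemma cover_count {q : ℕ} (hp : (q + 1).Prime) (S : Finset (AddSubgroup G))
    (hcov : ∀ g : G, ∃ K ∈ S, g ∈ K) (H : AddSubgroup G) (h : H.index = q + 1) :
    Nat.card G ≤ ∑ K ∈ S with K ≠ H, Nat.card K ∧
    ∀ K₁ ∈ S, ∀ K₂ ∈ S, K₁ ≠ K₂ → ∀ g, g ∈ K₁ → g ∈ K₂ → g ∉ H →
      Nat.card G < ∑ K ∈ S with K ≠ H, Nat.card K := by
  classical
  have hq : 0 < q := by have := hp.two_le; omega
  have htop : (q + 1) * (finOf (⊤ : AddSubgroup G) \ finOf H).card = q * Nat.card G := by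
    have := card_diff q H ⊤ (by rw [AddSubgroup.relIndex_top_right, h])
    rwa [AddSubgroup.card_top] at this
  have hsum : (q + 1) * ∑ K ∈ S with K ≠ H, (finOf K \ finOf H).card
      ≤ q * ∑ K ∈ S with K ≠ H, Nat.card K := by
    rw [Finset.mul_sum, Finset.mul_sum]
    exact Finset.sum_le_sum fun K _ => card_diff_le hp H K h
  have hsub : finOf (⊤ : AddSubgroup G) \ finOf H ⊆
      (S.filter (· ≠ H)).biUnion (fun K => finOf K \ finOf H) := by
    intro g hg
    simp only [Finset.mem_sdiff, mem_finOf, Finset.mem_biUnion, Finset.mem_filter] at hg ⊢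
    obtain ⟨K, hK, hgK⟩ := hcov g
    exact ⟨K, ⟨hK, fun e => hg.2 (e ▸ hgK)⟩, hgK, hg.2⟩
  constructor
  · have h1 := (Finset.card_le_card hsub).trans Finset.card_biUnion_le
    have h2 := Nat.mul_le_mul_left (q + 1) h1
    exact Nat.le_of_mul_le_mul_left (htop ▸ h2.trans hsum) hq
  · intro K₁ h₁ K₂ h₂ hne g g1 g2 gH
    have hsub' : finOf (⊤ : AddSubgroup G) \ finOf H ⊆
        (S.filter (· ≠ H)).biUnion
          (fun K => if K = K₁ then (finOf K \ finOf H).erase g else finOf K \ finOf H) := by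
      intro x hx
      by_cases hxg : x = g
      · subst hxg
        rw [Finset.mem_biUnion]
        refine ⟨K₂, ?_, ?_⟩
        · rw [Finset.mem_filter]
          exact ⟨h₂, fun e => gH (e ▸ g2)⟩
        · rw [if_neg hne.symm]
          simp [mem_finOf, g2, gH]
      · have := hsub hx
        rw [Finset.mem_biUnion] at this ⊢
        obtain ⟨K, hK, hxK⟩ := this
        refine ⟨K, hK, ?_⟩
        split_ifs
        · exact Finset.mem_erase.2 ⟨hxg, hxK⟩
        · exact hxK
    have h1 := (Finset.card_le_card hsub').trans Finset.card_biUnion_le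
    have hlt : ∑ K ∈ S with K ≠ H,
        (if K = K₁ then (finOf K \ finOf H).erase g else finOf K \ finOf H).card <
        ∑ K ∈ S with K ≠ H, (finOf K \ finOf H).card := by
      apply Finset.sum_lt_sum
      · intro K _
        split_ifs
        · exact Finset.card_le_card (Finset.erase_subset _ _)
        · exact le_rfl
      · refine ⟨K₁, ?_, ?_⟩
        · rw [Finset.mem_filter]
          exact ⟨h₁, fun e => gH (e ▸ g1)⟩
        · rw [if_pos rfl]
          apply Finset.card_erase_lt_of_mem
          simp [mem_finOf, g1, gH]
    have h2 := Nat.mul_lt_mul_of_pos_left (h1.trans_lt hlt) (Nat.succ_pos q)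
    exact Nat.lt_of_mul_lt_mul_left (a := q) (htop ▸ h2.trans_le hsum)

lemma p_dvd_index {p n : ℕ} (hp : p.Prime) (hn : Nat.card G = p ^ n) (K : AddSubgroup G)
    (hK : K ≠ ⊤) : ∃ k, K.index = p ^ (k + 1) := by
  have h1 : K.index ∣ p ^ n := hn ▸ K.index_dvd_card
  obtain ⟨k, _, hk⟩ := (Nat.dvd_prime_pow hp).1 h1
  cases k with
  | zero => exact absurd (AddSubgroup.index_eq_one.1 (by simpa using hk)) hK
  | succ k => exact ⟨k, hk⟩

lemma p_mul_card_le {p n : ℕ} (hp : p.Prime) (hn : Nat.card G = p ^ n) (K : AddSubgroup G)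
    (hK : K ≠ ⊤) : p * Nat.card K ≤ Nat.card G := by
  obtain ⟨k, hk⟩ := p_dvd_index hp hn K hK
  rw [← K.card_mul_index, hk, mul_comm]
  exact Nat.mul_le_mul_left _ (Nat.le_self_pow (Nat.succ_ne_zero k) p)

lemma cover_main {p n : ℕ} (hp : p.Prime) (hn : Nat.card G = p ^ n)
    (S : Finset (AddSubgroup G)) (hcov : ∀ g : G, ∃ K ∈ S, g ∈ K) (hS : ∀ K ∈ S, K ≠ ⊤) :
    p + 1 ≤ S.card ∧ (S.card = p + 1 → (∀ K ∈ S, K.index = p) ∧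
      ∀ K₁ ∈ S, ∀ K₂ ∈ S, K₁ ≠ K₂ → ∀ H ∈ S, K₁ ⊓ K₂ ≤ H) := by
  classical
  have hN : 0 < Nat.card G := Nat.card_pos
  by_cases hex : ∃ H ∈ S, H.index = p
  · obtain ⟨H, hH, hi⟩ := hex
    obtain ⟨q, rfl⟩ : ∃ q, p = q + 1 := ⟨p - 1, by have := hp.two_le; omega⟩
    have hc : ∀ H ∈ S, (S.filter (· ≠ H)).card + 1 = S.card := by
      intro H hH
      rw [Finset.filter_ne', Finset.card_erase_add_one hH]
    have hle : (q + 1) * ∑ K ∈ S with K ≠ H, Nat.card K ≤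
        ∑ K ∈ S with K ≠ H, Nat.card G := by
      rw [Finset.mul_sum]
      exact Finset.sum_le_sum fun K hK =>
        p_mul_card_le hp hn K (hS K (Finset.mem_filter.1 hK).1)
    have h1 := (Nat.mul_le_mul_left (q + 1) (cover_count hp S hcov H hi).1).trans hle
    constructor
    · rw [Finset.sum_const, smul_eq_mul] at h1
      have := Nat.le_of_mul_le_mul_right h1 hN
      have := hc H hH
      omega
    · intro hcard
      have hcH : (S.filter (· ≠ H)).card = q + 1 := by have := hc H hH; omega
      have heq : ∑ K ∈ S with K ≠ H, (q + 1) * Nat.card K =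
        ∑ K ∈ S with K ≠ H, Nat.card G := by
        rw [← Finset.mul_sum]
        refine le_antisymm hle ?_
        rw [Finset.sum_const, smul_eq_mul, hcH]
        exact Nat.mul_le_mul_left _ (cover_count hp S hcov H hi).1
      rw [Finset.sum_eq_sum_iff_of_le (fun K hK =>
        p_mul_card_le hp hn K (hS K (Finset.mem_filter.1 hK).1))] at heq
      have hall : ∀ K ∈ S, K.index = q + 1 := by
        intro K hK
        by_cases e : K = H
        · rw [e, hi]
        · have h2 := heq K (Finset.mem_filter.2 ⟨hK, e⟩)
          rw [← K.index_mul_card] at h2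
          exact (Nat.eq_of_mul_eq_mul_right Nat.card_pos h2).symm
      refine ⟨hall, ?_⟩
      intro K₁ h₁ K₂ h₂ hne L hL g hg
      by_contra hgL
      have h3 := (cover_count hp S hcov L (hall L hL)).2 K₁ h₁ K₂ h₂ hne g hg.1 hg.2 hgL
      have h4 : (q + 1) * ∑ K ∈ S with K ≠ L, Nat.card K = (q + 1) * Nat.card G := by
        rw [Finset.mul_sum]
        have : ∀ K ∈ S.filter (· ≠ L), (q + 1) * Nat.card K = Nat.card G := by
          intro K hK
          rw [← K.index_mul_card, hall K (Finset.mem_filter.1 hK).1]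
        rw [Finset.sum_congr rfl this, Finset.sum_const, smul_eq_mul]
        congr 1
        have := hc L hL; omega
      have := Nat.eq_of_mul_eq_mul_left (Nat.succ_pos q) h4
      omega
  · have hbig : p + 2 ≤ S.card := by
      have h2 : ∀ K ∈ S, p ^ 2 * Nat.card K ≤ Nat.card G := by
        intro K hK
        obtain ⟨k, hk⟩ := p_dvd_index hp hn K (hS K hK)
        rw [← K.index_mul_card, hk]
        apply Nat.mul_le_mul_right
        apply Nat.pow_le_pow_right hp.pos
        rcases k with _ | k
        · exact absurd ⟨K, hK, by simpa using hk⟩ hex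
        · omega
      have h3 : Nat.card G ≤ ∑ K ∈ S, Nat.card K := by
        have hsub : (Finset.univ : Finset G) ⊆ S.biUnion finOf := by
          intro g _
          obtain ⟨K, hK, hg⟩ := hcov g
          exact Finset.mem_biUnion.2 ⟨K, hK, (mem_finOf K g).2 hg⟩
        have := (Finset.card_le_card hsub).trans Finset.card_biUnion_le
        simpa [card_finOf] using this
      have h4 : p ^ 2 * Nat.card G ≤ S.card * Nat.card G := by
        refine (Nat.mul_le_mul_left _ h3).trans ?_
        rw [Finset.mul_sum, ← smul_eq_mul (S.card), ← Finset.sum_const]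
        exact Finset.sum_le_sum h2
      have := Nat.le_of_mul_le_mul_right h4 hN
      have := hp.two_le
      nlinarith
    exact ⟨by omega, fun e => by omega⟩

lemma prime_mul_eq_sq {p a b : ℕ} (hp : p.Prime) (h : a * b = p ^ 2) (ha : a ≠ 1) (hb : b ≠ 1) :
    a = p ∧ b = p := by
  obtain ⟨i, hi, rfl⟩ := (Nat.dvd_prime_pow hp).1 (Dvd.intro _ h)
  have hi' : i = 1 := by
    interval_cases i
    · simp at ha
    · rfl
    · have : 0 < p ^ 2 := pow_pos hp.pos 2
      exact absurd (Nat.eq_of_mul_eq_mul_left this (h.trans (mul_one _).symm)) hb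
  subst hi'
  refine ⟨pow_one p, ?_⟩
  rw [pow_one, sq] at h
  exact Nat.eq_of_mul_eq_mul_left hp.pos h

lemma cover_sq {p : ℕ} (hp : p.Prime) (Z : AddSubgroup G) (hZ : Z.index = p ^ 2)
    (S : Finset (AddSubgroup G)) (hcov : ∀ g : G, ∃ K ∈ S, g ∈ K) (hS : ∀ K ∈ S, K ≠ ⊤)
    (hZK : ∀ K ∈ S, Z ≤ K) (hKZ : ∀ K ∈ S, ¬ K ≤ Z) : S.card = p + 1 := by
  classical
  have hidx : ∀ K ∈ S, Z.relIndex K = p ∧ K.index = p := by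
    intro K hK
    apply prime_mul_eq_sq hp
    · rw [AddSubgroup.relIndex_mul_index (hZK K hK), hZ]
    · exact fun e => hKZ K hK (AddSubgroup.relIndex_eq_one.1 e)
    · exact fun e => hS K hK (AddSubgroup.index_eq_one.1 e)
  have key : ∀ K ∈ S, ∀ L ∈ S, ¬ K ⊓ L ≤ Z → K ≤ L := by
    intro K hK L hL hn
    have h1 := AddSubgroup.relIndex_mul_relIndex Z (K ⊓ L) K
      (le_inf (hZK K hK) (hZK L hL)) inf_le_left
    rw [(hidx K hK).1] at h1
    rcases (Nat.dvd_prime hp).1 (Dvd.intro _ h1) with h2 | h2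
    · exact absurd (AddSubgroup.relIndex_eq_one.1 h2) hn
    · rw [h2] at h1
      have h3 := Nat.eq_of_mul_eq_mul_left hp.pos (h1.trans (mul_one p).symm)
      exact (AddSubgroup.relIndex_eq_one.1 h3).trans inf_le_right
  have hU : finOf (⊤ : AddSubgroup G) \ finOf Z = S.biUnion (fun K => finOf K \ finOf Z) := by
    ext g
    simp only [Finset.mem_sdiff, mem_finOf, Finset.mem_biUnion]
    constructor
    · rintro ⟨_, hg⟩
      obtain ⟨K, hK, hgK⟩ := hcov g
      exact ⟨K, hK, hgK, hg⟩
    · rintro ⟨K, _, _, hg⟩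
      exact ⟨trivial, hg⟩
  have hcard : (finOf (⊤ : AddSubgroup G) \ finOf Z).card = ∑ K ∈ S, (finOf K \ finOf Z).card := by
    rw [hU]
    apply Finset.card_biUnion
    intro K hK L hL hne
    rw [Function.onFun, Finset.disjoint_left]
    intro g hg1 hg2
    simp only [Finset.mem_sdiff, mem_finOf] at hg1 hg2
    have hn : ¬ K ⊓ L ≤ Z := fun hle => hg1.2 (hle ⟨hg1.1, hg2.1⟩)
    exact hne (le_antisymm (key K hK L hL hn) (key L hL K hK (by rwa [inf_comm])))
  obtain ⟨q, rfl⟩ : ∃ q, p = q + 1 := ⟨p - 1, by have := hp.two_le; omega⟩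
  have hq : 0 < q := by have := hp.two_le; omega
  have hz : 0 < Nat.card Z := Nat.card_pos
  have hK : ∀ K ∈ S, (finOf K \ finOf Z).card = q * Nat.card Z := by
    intro K hK
    have h1 := card_inf_mul Z K
    have h2 := card_diff_add Z K
    rw [inf_of_le_left (hZK K hK)] at h1 h2
    rw [(hidx K hK).1] at h1
    nlinarith
  have hT : (finOf (⊤ : AddSubgroup G) \ finOf Z).card = (q * Nat.card Z) * (q + 2) := by
    have h1 := card_inf_mul Z ⊤
    have h2 := card_diff_add Z ⊤
    rw [inf_top_eq] at h1 h2
    rw [AddSubgroup.relIndex_top_right, hZ] at h1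
    nlinarith
  rw [hT, Finset.sum_congr rfl hK, Finset.sum_const, smul_eq_mul, mul_comm] at hcard
  exact (Nat.eq_of_mul_eq_mul_right (Nat.mul_pos hq hz) hcard).symm

lemma quot_equiv {p : ℕ} (hp : p.Prime) (Z H K : AddSubgroup G) (hH : H.index = p)
    (hK : K.index = p) (hne : H ≠ K) (hZ : H ⊓ K = Z) :
    Nonempty ((G ⧸ Z) ≃+ (ZMod p × ZMod p)) := by
  haveI : Fact p.Prime := ⟨hp⟩
  have hKH : ¬ K ≤ H := by
    intro hle
    have h1 := AddSubgroup.relIndex_mul_index hle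
    rw [hH, hK] at h1
    have h2 := Nat.eq_of_mul_eq_mul_right hp.pos (h1.trans (one_mul p).symm)
    exact hne (le_antisymm (AddSubgroup.relIndex_eq_one.1 h2) hle)
  have hZi : Z.index = p * p := by
    have h1 := AddSubgroup.relIndex_mul_index (hZ ▸ inf_le_right : Z ≤ K)
    rw [← hZ, AddSubgroup.inf_relIndex_right, relIndex_of_prime hp H K hH hKH, hK] at h1
    rw [← hZ, ← h1]
  have eqv : ∀ L : AddSubgroup G, L.index = p → Nonempty ((G ⧸ L) ≃+ ZMod p) := by
    intro L hL
    have hc : Nat.card (G ⧸ L) = p := hL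
    have e := zmodAddCyclicAddEquiv (isAddCyclic_of_prime_card hc)
    rw [hc] at e
    exact ⟨e.symm⟩
  obtain ⟨eH⟩ := eqv H hH
  obtain ⟨eK⟩ := eqv K hK
  let φ : G →+ (G ⧸ H) × (G ⧸ K) := (QuotientAddGroup.mk' H).prod (QuotientAddGroup.mk' K)
  have hker : φ.ker = Z := by
    rw [← hZ]
    ext g
    simp [φ, AddMonoidHom.mem_ker]
  subst hker
  have hb : Function.Bijective (QuotientAddGroup.kerLift φ) := by
    rw [Nat.bijective_iff_injective_and_card]
    refine ⟨QuotientAddGroup.kerLift_injective φ, ?_⟩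
    rw [Nat.card_prod]
    change φ.ker.index = H.index * K.index
    rw [hZi, hH, hK]
  exact ⟨(AddEquiv.ofBijective _ hb).trans (eH.prodCongr eK)⟩

end CoverLemmas

/-- The centralizer as an additive subgroup. -/
def centAdd {R : Type*} [NonUnitalRing R] (r : R) : AddSubgroup R where
  carrier := rCentralizer r
  zero_mem' := by simp [rCentralizer]
  add_mem' := by
    intro a b ha hb
    simp only [rCentralizer, Set.mem_ofPred_eq] at *
    rw [mul_add, add_mul, ha, hb]
  neg_mem' := by
    intro a ha
    simp only [rCentralizer, Set.mem_ofPred_eq] at *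
    rw [mul_neg, neg_mul, ha]

lemma mem_centAdd {R : Type*} [NonUnitalRing R] (r s : R) : s ∈ centAdd r ↔ r * s = s * r :=
  Iff.rfl

lemma mem_centerAdd {R : Type*} [NonUnitalRing R] (s : R) :
    s ∈ centerAddSubgroup R ↔ ∀ r, r * s = s * r :=
  Iff.rfl

/-- For a noncommutative finite `p`-ring, `|Cent(R)| ≥ p + 2`, with equality iff
`R/Z(R) ≅ ℤ_p × ℤ_p` as additive groups. -/
theorem cent_ge_p_add_two (p : ℕ) (hp : p.Prime) (R : Type*) [NonUnitalRing R] [Finite R]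
    (hcard : ∃ n : ℕ, Nat.card R = p ^ n) (h : ∃ x y : R, x * y ≠ y * x) :
    p + 2 ≤ (Cent R).ncard ∧
      ((Cent R).ncard = p + 2 ↔
        Nonempty ((R ⧸ centerAddSubgroup R) ≃+ (ZMod p × ZMod p))) := by
  classical
  haveI := Fintype.ofFinite R
  obtain ⟨n, hn⟩ := hcard
  obtain ⟨x, y, hxy⟩ := h
  let T : Finset (AddSubgroup R) := Finset.univ.image centAdd
  let S : Finset (AddSubgroup R) := T.erase ⊤
  have htop : ∀ r : R, centAdd r = ⊤ ↔ r ∈ centerAddSubgroup R := by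
    intro r
    rw [AddSubgroup.eq_top_iff', mem_centerAdd]
    exact forall_congr' fun s => eq_comm
  have hT : (Cent R).ncard = T.card := by
    have : Cent R = (fun H : AddSubgroup R => (H : Set R)) '' (T : Set (AddSubgroup R)) := by
      ext A
      simp only [T, Cent, Set.mem_range, Finset.coe_image, Finset.coe_univ, Set.image_univ,
        Set.mem_image, exists_exists_eq_and]
      rfl
    rw [this, Set.ncard_image_of_injective _ SetLike.coe_injective, Set.ncard_coe_finset]
  have htopT : (⊤ : AddSubgroup R) ∈ T :=
    Finset.mem_image.2 ⟨0, Finset.mem_univ _, (htop 0).2 (zero_mem _)⟩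
  have hTS : T.card = S.card + 1 := (Finset.card_erase_add_one htopT).symm
  have hmemS : ∀ r : R, r ∉ centerAddSubgroup R → centAdd r ∈ S := fun r hr =>
    Finset.mem_erase.2 ⟨fun e => hr ((htop r).1 e), Finset.mem_image_of_mem _ (Finset.mem_univ _)⟩
  have hSmem : ∀ K ∈ S, ∃ r, r ∉ centerAddSubgroup R ∧ centAdd r = K := by
    intro K hK
    obtain ⟨h1, h2⟩ := Finset.mem_erase.1 hK
    obtain ⟨r, _, rfl⟩ := Finset.mem_image.1 h2
    exact ⟨r, fun e => h1 ((htop r).2 e), rfl⟩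
  have hx : x ∉ centerAddSubgroup R := fun e => hxy ((e y).symm)
  have hcov : ∀ g : R, ∃ K ∈ S, g ∈ K := by
    intro g
    by_cases hg : g ∈ centerAddSubgroup R
    · exact ⟨centAdd x, hmemS x hx, hg x⟩
    · exact ⟨centAdd g, hmemS g hg, rfl⟩
  have hS : ∀ K ∈ S, K ≠ ⊤ := fun K hK => (Finset.mem_erase.1 hK).1
  have hZle : ∀ K ∈ S, centerAddSubgroup R ≤ K := by
    intro K hK
    obtain ⟨r, _, rfl⟩ := hSmem K hK
    exact fun s hs => hs r
  obtain ⟨hge, heq⟩ := cover_main hp hn S hcov hS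
  rw [hT, hTS]
  refine ⟨by omega, fun hc => ?_, ?_⟩
  · obtain ⟨hi, hint⟩ := heq (by omega)
    have h1 : 1 < S.card := by have := hp.two_le; omega
    obtain ⟨H, hH, K, hK, hne⟩ := Finset.one_lt_card.1 h1
    refine quot_equiv hp _ H K (hi H hH) (hi K hK) hne ?_
    apply le_antisymm
    · intro g hg r
      by_cases hr : r ∈ centerAddSubgroup R
      · exact (hr g).symm
      · exact hint H hH K hK hne _ (hmemS r hr) hg
    · exact le_inf (hZle H hH) (hZle K hK)
  · rintro ⟨e⟩
    have hZ : (centerAddSubgroup R).index = p ^ 2 := by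
      change Nat.card (R ⧸ centerAddSubgroup R) = p ^ 2
      rw [Nat.card_congr e.toEquiv, Nat.card_prod, Nat.card_zmod, sq]
    rw [cover_sq hp _ hZ S hcov hS hZle]
    intro K hK hle
    obtain ⟨r, hr, rfl⟩ := hSmem K hK
    exact hr (hle (mem_centAdd r r |>.2 rfl))
end

section
/- Let p be a prime and let R be a noncommutative finite (not necessarily unital) ring whose order is a power of p. If |Cent(R)| = p + 2, then d(R) = (p² + p − 1)/p³. -/
/-- The commutativity degree of a finite ring: `d(R) = (1/|R|²) ∑_{r ∈ R} |C(r)|`. -/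
noncomputable def commDeg (R : Type*) [NonUnitalRing R] [Fintype R] : ℚ :=
  (∑ r : R, ((rCentralizer r).ncard : ℚ)) / ((Fintype.card R : ℚ)) ^ 2


namespace CommDegAux

variable {R : Type*} [NonUnitalRing R]

/-- additive commutator map `s ↦ s*y - y*s`. -/
def br (y : R) : R →+ R := AddMonoidHom.mulRight y - AddMonoidHom.mulLeft y

theorem br_apply (y s : R) : br y s = s * y - y * s := rfl

theorem mem_cent (r s : R) : s ∈ rCentralizer r ↔ br r s = 0 := by
  rw [br_apply, sub_eq_zero]
  exact ⟨fun h => Eq.symm h, fun h => Eq.symm h⟩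

theorem br_self (y : R) : br y y = 0 := by simp [br_apply]

theorem br_swap (x y : R) : br y x = - br x y := by simp [br_apply]

theorem br_add (x y s : R) : br (x + y) s = br x s + br y s := by
  rw [br_swap, map_add, br_swap x, br_swap y]; abel

theorem br_nsmul (n : ℕ) (x s : R) : br (n • x) s = n • br x s := by
  rw [br_swap, map_nsmul, br_swap x]; simp

theorem dvd_of_smul [Fintype R] {p : ℕ} (hp : p.Prime)
    (hcard : ∃ n : ℕ, Fintype.card R = p ^ n) {c : R} (hc : c ≠ 0) (m : ℤ)
    (hm : m • c = 0) : (p : ℤ) ∣ m := by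
  obtain ⟨n, hn⟩ := hcard
  have h1 : (addOrderOf c : ℤ) ∣ m := addOrderOf_dvd_iff_zsmul_eq_zero.mpr hm
  have h2 : addOrderOf c ∣ p ^ n := hn ▸ addOrderOf_dvd_card
  obtain ⟨k, -, hk⟩ := (Nat.dvd_prime_pow hp).mp h2
  rcases Nat.eq_zero_or_pos k with h0 | h0
  · subst h0
    exact absurd (AddMonoid.addOrderOf_eq_one_iff.mp (by simpa using hk)) hc
  · refine dvd_trans ?_ h1
    rw [hk]
    exact_mod_cast dvd_pow_self p h0.ne'

theorem fin_inj [Fintype R] {p : ℕ} (hp : p.Prime)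
    (hcard : ∃ n : ℕ, Fintype.card R = p ^ n) {c : R} (hc : c ≠ 0) (a b : Fin p)
    (h : (a : ℕ) • c = (b : ℕ) • c) : a = b := by
  have h1 := dvd_of_smul hp hcard hc ((a : ℤ) - b)
    (by rw [sub_smul, natCast_zsmul, natCast_zsmul, h, sub_self])
  have ha := a.2
  have hb := b.2
  have h2 : ((a : ℤ) - b) = 0 := by
    apply Int.eq_zero_of_abs_lt_dvd h1
    rw [abs_lt]; constructor <;> omega
  ext; omega

theorem br_comb (a b : ℕ) (x y : R) :
    br (a • x + y) (b • x + y) = b • br y x - a • br y x := by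
  rw [br_add, map_add, map_add, br_nsmul, br_nsmul, map_nsmul, map_nsmul, br_self, br_self,
    br_swap y x]
  simp; abel

/-- classification of the centralizers -/
theorem classify [Fintype R] {p : ℕ} (hp : p.Prime)
    (hcard : ∃ n : ℕ, Fintype.card R = p ^ n) (hcent : (Cent R).ncard = p + 2)
    {x y : R} (hxy : br y x ≠ 0) (r : R) :
    rCentralizer r = Set.univ ∨ rCentralizer r = rCentralizer x ∨
      ∃ a : Fin p, rCentralizer r = rCentralizer ((a : ℕ) • x + y) := by
  let f : Option (Option (Fin p)) → R := fun o => match o with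
    | none => 0
    | some none => x
    | some (some a) => (a : ℕ) • x + y
  let g : Option (Option (Fin p)) → Set R := fun o => rCentralizer (f o)
  have h0 : rCentralizer (0 : R) = Set.univ := by
    ext s; simp [rCentralizer]
  have hyx : br x y ≠ 0 := by rw [br_swap]; simpa using hxy
  have hxa : ∀ a : ℕ, x ∉ rCentralizer (a • x + y) := fun a ha => by
    rw [mem_cent, br_add, br_nsmul, br_self] at ha
    simp at ha; exact hxy ha
  have hxx : x ∈ rCentralizer x := rfl
  have hyx' : y ∉ rCentralizer x := by rwa [mem_cent]
  have hinj : Function.Injective g := by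
    rintro (_ | _ | a) (_ | _ | b) hab
    · rfl
    · exfalso; apply hyx'
      change rCentralizer 0 = rCentralizer x at hab
      rw [← hab, h0]; trivial
    · exfalso; apply hxa b
      change rCentralizer 0 = rCentralizer (_ + y) at hab
      rw [← hab, h0]; trivial
    · exfalso; apply hyx'
      change rCentralizer x = rCentralizer 0 at hab
      rw [hab, h0]; trivial
    · rfl
    · exfalso; apply hxa b
      change rCentralizer x = rCentralizer (_ + y) at hab
      rw [← hab]; exact hxx
    · exfalso; apply hxa a
      change rCentralizer (_ + y) = rCentralizer 0 at hab
      rw [hab, h0]; trivial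
    · exfalso; apply hxa a
      change rCentralizer (_ + y) = rCentralizer x at hab
      rw [hab]; exact hxx
    · change rCentralizer ((a : ℕ) • x + y) = rCentralizer ((b : ℕ) • x + y) at hab
      have : (b : ℕ) • x + y ∈ rCentralizer ((a : ℕ) • x + y) := by rw [hab]; rfl
      rw [mem_cent, br_comb, sub_eq_zero] at this
      rw [fin_inj hp hcard hxy _ _ this]
  have hsub : Set.range g ⊆ Cent R := by
    rintro _ ⟨o, rfl⟩; exact ⟨f o, rfl⟩
  have hc : (Set.range g).ncard = p + 2 := by
    rw [← Nat.card_coe_set_eq, Nat.card_range_of_injective hinj]; simp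
  have heq : Set.range g = Cent R :=
    Set.eq_of_subset_of_ncard_le hsub (by rw [hc, hcent]) (Set.toFinite _)
  have hr : rCentralizer r ∈ Set.range g := by rw [heq]; exact ⟨r, rfl⟩
  obtain ⟨o, ho⟩ := hr
  rcases o with (_ | _ | a)
  · left; rw [← ho]; exact h0
  · right; left; exact ho.symm
  · right; right; exact ⟨a, ho.symm⟩

theorem lemB [Fintype R] {p : ℕ} (hp : p.Prime)
    (hcard : ∃ n : ℕ, Fintype.card R = p ^ n) (hcent : (Cent R).ncard = p + 2)
    {x y s : R} (hxy : br y x ≠ 0) (hxs : br s x ≠ 0) :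
    ∃ a : Fin p, y ∈ rCentralizer ((a : ℕ) • x + s) := by
  have hx : x ∉ rCentralizer y := by rwa [mem_cent]
  rcases classify hp hcard hcent hxs y with h | h | ⟨a, h⟩
  · exact absurd (h ▸ Set.mem_univ x) hx
  · exact absurd (by rw [h]; rfl) hx
  · exact ⟨a, by rw [← h]; rfl⟩

theorem lemC [Fintype R] {p : ℕ} (hp : p.Prime)
    (hcard : ∃ n : ℕ, Fintype.card R = p ^ n) (hcent : (Cent R).ncard = p + 2)
    {x y : R} (hxy : br y x ≠ 0) : addOrderOf (br y x) = p := by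
  have h1 : br (p • x + y) x ≠ 0 := by
    rw [br_add, br_nsmul, br_self]; simpa using hxy
  obtain ⟨a, ha⟩ := lemB hp hcard hcent h1 hxy
  rw [mem_cent, br_comb] at ha
  have h2 := dvd_of_smul hp hcard hxy ((p : ℤ) - a)
    (by rw [sub_smul, natCast_zsmul, natCast_zsmul, ha])
  have h3 : (p : ℤ) ∣ (a : ℕ) := by simpa using (dvd_sub_right (dvd_refl (p : ℤ))).mp h2
  have h4 : (a : ℕ) = 0 := Nat.eq_zero_of_dvd_of_lt (by exact_mod_cast h3) a.2
  rw [h4] at ha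
  haveI := Fact.mk hp
  exact addOrderOf_eq_prime (by simpa using ha) hxy

theorem lemD [Fintype R] {p : ℕ} (hp : p.Prime)
    (hcard : ∃ n : ℕ, Fintype.card R = p ^ n) (hcent : (Cent R).ncard = p + 2)
    {x y : R} (hxy : br y x ≠ 0) (s : R) : br y s ∈ AddSubgroup.zmultiples (br y x) := by
  have key : ∀ s : R, br s x ≠ 0 → br y s ∈ AddSubgroup.zmultiples (br y x) := by
    intro s hs
    obtain ⟨a, ha⟩ := lemB hp hcard hcent hxy hs
    rw [mem_cent, br_swap, map_add, map_nsmul, neg_eq_zero] at ha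
    rw [eq_neg_of_add_eq_zero_right ha]
    exact neg_mem (nsmul_mem (AddSubgroup.mem_zmultiples _) _)
  by_cases hs : br s x = 0
  · have := key (s + y) (by rw [br_add, hs]; simpa using hxy)
    rwa [map_add, br_self, add_zero] at this
  · exact key s hs

theorem range_br [Fintype R] {p : ℕ} (hp : p.Prime)
    (hcard : ∃ n : ℕ, Fintype.card R = p ^ n) (hcent : (Cent R).ncard = p + 2)
    {x y : R} (hxy : br y x ≠ 0) : (br y).range = AddSubgroup.zmultiples (br y x) := by
  apply le_antisymm
  · rintro _ ⟨s, rfl⟩; exact lemD hp hcard hcent hxy s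
  · rw [AddSubgroup.zmultiples_le]; exact ⟨x, rfl⟩

theorem card_C [Fintype R] {p : ℕ} (hp : p.Prime)
    (hcard : ∃ n : ℕ, Fintype.card R = p ^ n) (hcent : (Cent R).ncard = p + 2)
    {x y : R} (hxy : br y x ≠ 0) : (rCentralizer y).ncard * p = Fintype.card R := by
  have h1 := (br y).ker.card_mul_index
  rw [AddSubgroup.index_ker, range_br hp hcard hcent hxy, Nat.card_zmultiples,
    lemC hp hcard hcent hxy, Nat.card_eq_fintype_card (α := R)] at h1
  rw [← h1]
  congr 1
  rw [← Nat.card_coe_set_eq]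
  congr 1
  have : rCentralizer y = ((br y).ker : Set R) := by
    ext s; rw [mem_cent]; rfl
  rw [this]; rfl

theorem card_Z [Fintype R] {p : ℕ} (hp : p.Prime)
    (hcard : ∃ n : ℕ, Fintype.card R = p ^ n) (hcent : (Cent R).ncard = p + 2)
    {x y : R} (hxy : br y x ≠ 0) : (rCenter R).ncard * (p * p) = Fintype.card R := by
  let φ : R →+ R × R := (br x).prod (br y)
  have hyx : br x y ≠ 0 := by rw [br_swap]; simpa using hxy
  have hr : φ.range = (AddSubgroup.zmultiples (br x y)).prod (AddSubgroup.zmultiples (br y x)) := by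
    apply le_antisymm
    · rintro _ ⟨s, rfl⟩
      exact ⟨lemD hp hcard hcent hyx s, lemD hp hcard hcent hxy s⟩
    · rintro ⟨u, v⟩ ⟨hu, hv⟩
      obtain ⟨m, hm⟩ := hu
      obtain ⟨n, hn⟩ := hv
      refine ⟨m • y + n • x, ?_⟩
      simp only at hm hn
      simp only [φ, AddMonoidHom.prod_apply, map_add, map_zsmul, br_self]
      simp [hm, hn]
  have hk : rCenter R = (φ.ker : Set R) := by
    ext s
    have e : s ∈ (φ.ker : Set R) ↔ br x s = 0 ∧ br y s = 0 := by
      simp [φ, AddMonoidHom.mem_ker]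
    rw [e]
    constructor
    · intro hs
      exact ⟨(mem_cent _ _).mp (hs x), (mem_cent _ _).mp (hs y)⟩
    · rintro ⟨h1, h2⟩ r
      change s ∈ rCentralizer r
      rcases classify hp hcard hcent hxy r with h | h | ⟨a, h⟩
      · rw [h]; trivial
      · rw [h, mem_cent, h1]
      · rw [h, mem_cent, br_add, br_nsmul, h1, h2]; simp
  have h1 := φ.ker.card_mul_index
  have h2 : Nat.card ((AddSubgroup.zmultiples (br x y)).prod
      (AddSubgroup.zmultiples (br y x))) = p * p := by
    rw [Nat.card_congr (AddSubgroup.prodEquiv _ _).toEquiv, Nat.card_prod, Nat.card_zmultiples,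
      Nat.card_zmultiples, lemC hp hcard hcent hxy, lemC hp hcard hcent hyx]
  rw [AddSubgroup.index_ker, hr, h2, Nat.card_eq_fintype_card (α := R)] at h1
  rw [← h1, hk, ← Nat.card_coe_set_eq]
  rfl

end CommDegAux

open CommDegAux in
/-- For a noncommutative finite `p`-ring, `|Cent(R)| = p + 2` implies
`d(R) = (p² + p - 1)/p³`. -/
theorem commDeg_of_cent_eq (p : ℕ) (hp : p.Prime) (R : Type*) [NonUnitalRing R] [Fintype R]
    (hcard : ∃ n : ℕ, Fintype.card R = p ^ n) (h : ∃ x y : R, x * y ≠ y * x)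
    (hcent : (Cent R).ncard = p + 2) :
    commDeg R = ((p : ℚ) ^ 2 + p - 1) / (p : ℚ) ^ 3 := by
  classical
  obtain ⟨x, y, hxy⟩ := h
  have hxy' : br y x ≠ 0 := by rw [br_apply, sub_ne_zero]; exact hxy
  have hZ := card_Z hp hcard hcent hxy'
  have hp0 : (p : ℚ) ≠ 0 := by exact_mod_cast hp.ne_zero
  have hN0 : (Fintype.card R : ℚ) ≠ 0 := by
    haveI : Nonempty R := ⟨0⟩
    exact_mod_cast Fintype.card_ne_zero
  have hval : ∀ r : R, ((rCentralizer r).ncard : ℚ) =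
      (Fintype.card R : ℚ) / p +
        if r ∈ rCenter R then (Fintype.card R : ℚ) - (Fintype.card R : ℚ) / p else 0 := by
    intro r
    split_ifs with hr
    · have : rCentralizer r = Set.univ := by
        ext s; exact ⟨fun _ => trivial, fun _ => (hr s).symm⟩
      rw [this, Set.ncard_univ, Nat.card_eq_fintype_card]; ring
    · have : ∃ s, br r s ≠ 0 := by
        by_contra! hcon
        apply hr
        intro s
        have := hcon s
        rwa [br_apply, sub_eq_zero] at this
      obtain ⟨s, hs⟩ := this
      have h1 := card_C hp hcard hcent hs
      rw [← h1]; push_cast; field_simp; ring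
  have hZ' : ((Finset.univ.filter (fun r : R => r ∈ rCenter R)).card : ℚ)
      = (Fintype.card R : ℚ) / (p * p) := by
    rw [eq_div_iff (by positivity)]
    rw [← hZ, Set.ncard_eq_toFinset_card']
    push_cast
    congr 3
    ext; simp
  unfold commDeg
  rw [Finset.sum_congr rfl (fun r _ => hval r), Finset.sum_add_distrib, ← Finset.sum_filter,
    Finset.sum_const, Finset.sum_const, nsmul_eq_mul, nsmul_eq_mul, hZ', Finset.card_univ]
  field_simp
  ring
end
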